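/- Let g₀(t,x) := (2πt)^{−1/2}·exp(−x²/(2t)) for t > 0, and define w_n(x,t) := g₀(t,x)·v_n(x,−t)·(t/2)^{−n}. Then for every n ∈ ℕ, w_n satisfies the heat equation ∂w_n/∂t = (1/2)·∂²w_n/∂x² at every (x,t) with t > 0. -/

import Mathlib

/-- Heat polynomials `v_n(x,t) = Σ_{k=0}^{⌊n/2⌋} n!/(2^k·k!·(n−2k)!)·x^{n−2k}·t^k`. -/
noncomputable def heatPoly (n : ℕ) (x t : ℝ) : ℝ :=
  ∑ k ∈ Finset.range (n / 2 + 1),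
    ((Nat.factorial n : ℝ) / (2 ^ k * Nat.factorial k * Nat.factorial (n - 2 * k))) *
      x ^ (n - 2 * k) * t ^ k

/-- The Gaussian fundamental solution `g₀(t,x) = (2πt)^{−1/2}·exp(−x²/(2t))`. -/
noncomputable def gauss0 (t x : ℝ) : ℝ :=
  (2 * Real.pi * t) ^ (-(1 / 2 : ℝ)) * Real.exp (-x ^ 2 / (2 * t))

/-- The associated heat functions `w_n(x,t) = g₀(t,x)·v_n(x,−t)·(t/2)^{−n}`. -/
noncomputable def assocHeat (n : ℕ) (x t : ℝ) : ℝ :=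
  gauss0 t x * heatPoly n x (-t) * (t / 2) ^ (-(n : ℤ))

/-!
Up to the factor `2 ^ n`, the function `w_n` is the Appell transform
`(x, t) ↦ g₀(t, x) v_n(x / t, -1 / t)` of the heat polynomial `v_n`, because `v_n` is homogeneous
of degree `n` under the parabolic scaling `(x, t) ↦ (c x, c² t)`. The Appell transform preserves
solutions of the heat equation, and `v_n = exp((t / 2) ∂ₓ²) xⁿ` is one.
-/

open Polynomial

/-- The function `u` of space and time satisfies the heat equation `∂ₜu = (1/2) ∂ₓ²u` at every point
of the time slice `t`. The differentiability fields exclude solutions that arise only from `deriv`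
being `0` at points of non-differentiability. -/
structure IsCaloricAt (u : ℝ → ℝ → ℝ) (t : ℝ) : Prop where
  differentiableAt (x : ℝ) : DifferentiableAt ℝ (fun z : ℝ × ℝ => u z.1 z.2) (x, t)
  differentiable_deriv_space : Differentiable ℝ (deriv fun ξ => u ξ t)
  deriv_time (x : ℝ) : deriv (u x) t = 1 / 2 * deriv (deriv fun ξ => u ξ t) x

namespace IsCaloricAt

theorem of_hasDerivAt {u : ℝ → ℝ → ℝ} {t : ℝ} {u' u'' : ℝ → ℝ}
    (hu : ∀ x, DifferentiableAt ℝ (fun z : ℝ × ℝ => u z.1 z.2) (x, t))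
    (hu' : ∀ x, HasDerivAt (fun ξ => u ξ t) (u' x) x) (hu'' : ∀ x, HasDerivAt u' (u'' x) x)
    (htime : ∀ x, HasDerivAt (u x) (1 / 2 * u'' x) t) : IsCaloricAt u t := by
  have hderiv : deriv (fun ξ => u ξ t) = u' := funext fun x => (hu' x).deriv
  refine ⟨hu, ?_, fun x => ?_⟩ <;> rw [hderiv]
  · exact fun x => (hu'' x).differentiableAt
  · rw [(htime x).deriv, (hu'' x).deriv]

theorem const_mul {u : ℝ → ℝ → ℝ} {t : ℝ} (h : IsCaloricAt u t) (c : ℝ) :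
    IsCaloricAt (fun x τ => c * u x τ) t where
  differentiableAt x := (h.differentiableAt x).const_mul c
  differentiable_deriv_space := by
    simpa only [deriv_const_mul_field'] using h.differentiable_deriv_space.const_mul c
  deriv_time x := by
    simp only [deriv_const_mul_field', h.deriv_time x]
    ring

end IsCaloricAt

theorem hasDerivAt_comp₂_of_differentiableAt {𝕜 F : Type*} [NontriviallyNormedField 𝕜]
    [NormedAddCommGroup F] [NormedSpace 𝕜 F] {u : 𝕜 → 𝕜 → F} {a b : 𝕜 → 𝕜} {a' b' t : 𝕜}
    (hu : DifferentiableAt 𝕜 (fun z : 𝕜 × 𝕜 => u z.1 z.2) (a t, b t))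
    (ha : HasDerivAt a a' t) (hb : HasDerivAt b b' t) :
    HasDerivAt (fun τ => u (a τ) (b τ))
      (a' • deriv (fun ξ => u ξ (b t)) (a t) + b' • deriv (u (a t)) (b t)) t := by
  have hfst := hu.hasFDerivAt.comp_hasDerivAt (a t)
    ((hasDerivAt_id (a t)).prodMk (hasDerivAt_const (a t) (b t)))
  have hsnd := hu.hasFDerivAt.comp_hasDerivAt (b t)
    ((hasDerivAt_const (b t) (a t)).prodMk (hasDerivAt_id (b t)))
  have hsplit : (a', b') = a' • ((1, 0) : 𝕜 × 𝕜) + b' • ((0, 1) : 𝕜 × 𝕜) := by simp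
  refine (hu.hasFDerivAt.comp_hasDerivAt t (ha.prodMk hb)).congr_deriv ?_
  rw [hsplit, map_add, map_smul, map_smul]
  exact congrArg₂ (fun v w => a' • v + b' • w) hfst.deriv.symm hsnd.deriv.symm

theorem hasDerivAt_gauss0_space (t x : ℝ) :
    HasDerivAt (fun ξ => gauss0 t ξ) (-(x / t) * gauss0 t x) x := by
  have hexponent : HasDerivAt (fun ξ : ℝ => -ξ ^ 2 / (2 * t)) (-(x / t)) x :=
    ((hasDerivAt_pow 2 x).fun_neg.div_const (2 * t)).congr_deriv (by
      rw [neg_div, Nat.cast_ofNat, pow_one, mul_div_mul_left x t two_ne_zero])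
  refine (hexponent.exp.const_mul _).congr_deriv ?_
  rw [gauss0]
  ring

theorem hasDerivAt_gauss0_time {t : ℝ} (ht : 0 < t) (x : ℝ) :
    HasDerivAt (fun τ => gauss0 τ x) (1 / 2 * (x ^ 2 / t ^ 2 - 1 / t) * gauss0 t x) t := by
  have hpos : 0 < 2 * Real.pi * t := by positivity
  have hfactor := (hasDerivAt_const_mul (2 * Real.pi) (x := t)).rpow_const
    (p := -(1 / 2 : ℝ)) (Or.inl hpos.ne')
  have hexponent : HasDerivAt (fun τ : ℝ => -x ^ 2 / (2 * τ)) (x ^ 2 / (2 * t ^ 2)) t := by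
    refine ((hasDerivAt_const t (-x ^ 2)).fun_div
      (hasDerivAt_const_mul (2 : ℝ)) (by positivity)).congr_deriv ?_
    field_simp
    ring
  refine (hfactor.mul hexponent.exp).congr_deriv ?_
  rw [Real.rpow_sub_one hpos.ne', gauss0]
  field_simp
  ring

theorem differentiableAt_gauss0 {t : ℝ} (ht : 0 < t) (x : ℝ) :
    DifferentiableAt ℝ (fun z : ℝ × ℝ => gauss0 z.2 z.1) (x, t) := by
  unfold gauss0
  fun_prop (disch := positivity)

/-- The Appell transform of a function of space and time, a symmetry of the heat equation that
maps solutions at time `-1 / t` to solutions at time `t`. -/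
noncomputable def appellTransform (u : ℝ → ℝ → ℝ) (x t : ℝ) : ℝ :=
  gauss0 t x * u (x / t) (-1 / t)

theorem hasDerivAt_gauss0_mul_comp_div {f : ℝ → ℝ} {f' x t : ℝ} (hf : HasDerivAt f f' (x / t)) :
    HasDerivAt (fun ξ => gauss0 t ξ * f (ξ / t))
      (gauss0 t x * (f' / t - x / t * f (x / t))) x := by
  have hdiv : HasDerivAt (fun ξ => f (ξ / t)) (f' * (1 / t)) x :=
    hf.comp x ((hasDerivAt_id x).div_const t)
  refine ((hasDerivAt_gauss0_space t x).mul hdiv).congr_deriv ?_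
  ring

theorem differentiableAt_appellTransform {u : ℝ → ℝ → ℝ} {x t : ℝ} (ht : 0 < t)
    (hu : DifferentiableAt ℝ (fun z : ℝ × ℝ => u z.1 z.2) (x / t, -1 / t)) :
    DifferentiableAt ℝ (fun z : ℝ × ℝ => appellTransform u z.1 z.2) (x, t) := by
  have hinversion : DifferentiableAt ℝ (fun z : ℝ × ℝ => (z.1 / z.2, -1 / z.2)) (x, t) := by
    fun_prop (disch := exact ht.ne')
  exact (differentiableAt_gauss0 ht x).mul
    (hu.comp (f := fun z : ℝ × ℝ => (z.1 / z.2, -1 / z.2)) (x, t) hinversion)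

theorem hasDerivAt_appellTransform_time {u : ℝ → ℝ → ℝ} {x t : ℝ} (ht : 0 < t)
    (hu : DifferentiableAt ℝ (fun z : ℝ × ℝ => u z.1 z.2) (x / t, -1 / t)) :
    HasDerivAt (appellTransform u x)
      (gauss0 t x * (1 / 2 * (x ^ 2 / t ^ 2 - 1 / t) * u (x / t) (-1 / t)
        - x / t ^ 2 * deriv (fun ξ => u ξ (-1 / t)) (x / t)
        + 1 / t ^ 2 * deriv (u (x / t)) (-1 / t))) t := by
  have hinv (c : ℝ) : HasDerivAt (fun τ => c / τ) (-c / t ^ 2) t := by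
    simpa using (hasDerivAt_const t c).fun_div (hasDerivAt_id t) ht.ne'
  have hcomp := hasDerivAt_comp₂_of_differentiableAt hu (hinv x) (hinv (-1))
  refine ((hasDerivAt_gauss0_time ht x).mul hcomp).congr_deriv ?_
  simp only [smul_eq_mul]
  ring

theorem IsCaloricAt.appellTransform {u : ℝ → ℝ → ℝ} {t : ℝ} (ht : 0 < t)
    (hu : IsCaloricAt u (-1 / t)) : IsCaloricAt (appellTransform u) t := by
  set v := fun y => u y (-1 / t)
  have hv (y : ℝ) : HasDerivAt v (deriv v y) y :=
    ((hu.differentiableAt y).comp (f := fun ξ : ℝ => (ξ, -1 / t)) y (by fun_prop)).hasDerivAt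
  have hv' (y : ℝ) : HasDerivAt (deriv v) (deriv (deriv v) y) y :=
    (hu.differentiable_deriv_space y).hasDerivAt
  -- `∂ₓ` acts on `g₀(t, x) f(x / t)` through `f ↦ (y ↦ f'(y) / t - y f(y))`; differentiate again.
  have hconj (y : ℝ) : HasDerivAt (fun y => deriv v y / t - y * v y)
      (deriv (deriv v) y / t - (1 * v y + y * deriv v y)) y :=
    ((hv' y).div_const t).sub ((hasDerivAt_id y).mul (hv y))
  refine .of_hasDerivAt (fun x => differentiableAt_appellTransform ht (hu.differentiableAt _))
    (fun x => hasDerivAt_gauss0_mul_comp_div (hv (x / t)))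
    (fun x => hasDerivAt_gauss0_mul_comp_div (hconj (x / t))) (fun x => ?_)
  refine (hasDerivAt_appellTransform_time ht (hu.differentiableAt _)).congr_deriv ?_
  rw [hu.deriv_time]
  ring

/-- The solution `exp((t / 2) ∂ₓ²) p` of the heat equation whose value at time `0` is the
polynomial `p`; it is a finite sum since the derivatives of order above `p.natDegree` vanish. -/
noncomputable def heatFlow (p : ℝ[X]) (x t : ℝ) : ℝ :=
  ∑ k ∈ Finset.range (p.natDegree / 2 + 1),
    (t / 2) ^ k / k.factorial * (derivative^[2 * k] p).eval x

theorem heatFlow_eq_sum_range {p : ℝ[X]} {N : ℕ} (hN : p.natDegree < 2 * N) (x t : ℝ) :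
    heatFlow p x t =
      ∑ k ∈ Finset.range N, (t / 2) ^ k / k.factorial * (derivative^[2 * k] p).eval x := by
  refine Finset.sum_subset (Finset.range_mono (by lia)) fun k _ hk => ?_
  rw [Finset.mem_range] at hk
  rw [iterate_derivative_eq_zero (by lia), eval_zero, mul_zero]

theorem differentiable_heatFlow (p : ℝ[X]) :
    Differentiable ℝ (fun z : ℝ × ℝ => heatFlow p z.1 z.2) := by
  unfold heatFlow
  fun_prop

theorem hasDerivAt_heatFlow_space (p : ℝ[X]) (x t : ℝ) :
    HasDerivAt (fun ξ => heatFlow p ξ t) (heatFlow (derivative p) x t) x := by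
  have hN : (derivative p).natDegree < 2 * (p.natDegree / 2 + 1) := by
    have := natDegree_derivative_le p
    lia
  rw [heatFlow_eq_sum_range hN]
  refine HasDerivAt.fun_sum fun k _ => ?_
  rw [← Function.iterate_succ_apply, Function.iterate_succ_apply']
  exact (Polynomial.hasDerivAt _ x).const_mul _

theorem hasDerivAt_div_two_pow_div_factorial (k : ℕ) (t : ℝ) :
    HasDerivAt (fun τ : ℝ => (τ / 2) ^ (k + 1) / (k + 1).factorial)
      (1 / 2 * ((t / 2) ^ k / k.factorial)) t := by
  refine ((((hasDerivAt_id t).div_const 2).fun_pow (k + 1)).div_const _).congr_deriv ?_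
  rw [Nat.factorial_succ]
  push_cast
  simp only [id]
  field_simp

theorem hasDerivAt_heatFlow_time (p : ℝ[X]) (x t : ℝ) :
    HasDerivAt (heatFlow p x) (1 / 2 * heatFlow (derivative^[2] p) x t) t := by
  set N := p.natDegree + 1
  have hp : p.natDegree < 2 * (N + 1) := by lia
  have hp'' : (derivative^[2] p).natDegree < 2 * N := by
    have := natDegree_iterate_derivative p 2
    lia
  rw [funext (heatFlow_eq_sum_range hp x), heatFlow_eq_sum_range hp'', Finset.mul_sum]
  simp only [Finset.sum_range_succ' _ N, mul_zero, pow_zero]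
  refine (HasDerivAt.fun_sum fun k _ => ?_).add_const _
  rw [← Function.iterate_add_apply, ← mul_assoc]
  exact (hasDerivAt_div_two_pow_div_factorial k t).mul_const _

theorem isCaloricAt_heatFlow (p : ℝ[X]) (t : ℝ) : IsCaloricAt (heatFlow p) t :=
  .of_hasDerivAt (fun x => differentiable_heatFlow p (x, t))
    (fun x => hasDerivAt_heatFlow_space p x t)
    (fun x => hasDerivAt_heatFlow_space (derivative p) x t)
    (fun x => hasDerivAt_heatFlow_time p x t)

theorem heatPoly_eq_heatFlow (n : ℕ) : heatPoly n = heatFlow (X ^ n) := by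
  ext x t
  rw [heatPoly, heatFlow, natDegree_X_pow]
  refine Finset.sum_congr rfl fun k hk => ?_
  have hk' : 2 * k ≤ n := by
    rw [Finset.mem_range] at hk
    lia
  rw [iterate_derivative_X_pow_eq_C_mul, eval_C_mul, eval_pow, eval_X,
    ← Nat.factorial_mul_descFactorial hk', div_pow]
  push_cast
  field_simp

theorem heatPoly_parabolic_scaling (n : ℕ) (c x t : ℝ) :
    heatPoly n (c * x) (c ^ 2 * t) = c ^ n * heatPoly n x t := by
  rw [heatPoly, heatPoly, Finset.mul_sum]
  refine Finset.sum_congr rfl fun k hk => ?_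
  have hn : n = n - 2 * k + 2 * k := by
    rw [Finset.mem_range] at hk
    lia
  have hc : c ^ n = c ^ (n - 2 * k) * (c ^ 2) ^ k := by
    rw [← pow_mul, ← pow_add, ← hn]
  rw [hc, mul_pow, mul_pow]
  ring

theorem assocHeat_eq_appellTransform (n : ℕ) :
    assocHeat n = fun x t => 2 ^ n * appellTransform (heatPoly n) x t := by
  ext x t
  rcases eq_or_ne t 0 with rfl | ht
  · -- `gauss0 0 x = 0`, since `0 ^ (-1 / 2) = 0` for real powers
    simp [assocHeat, appellTransform, gauss0, Real.zero_rpow]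
  have hscaling : heatPoly n (x / t) (-1 / t) = (t ^ n)⁻¹ * heatPoly n x (-t) := by
    rw [← inv_pow, ← heatPoly_parabolic_scaling]
    congr 1 <;> field_simp
  rw [assocHeat, appellTransform, hscaling, zpow_neg, zpow_natCast, div_pow, inv_div]
  ring

theorem isCaloricAt_assocHeat (n : ℕ) {t : ℝ} (ht : 0 < t) : IsCaloricAt (assocHeat n) t := by
  rw [assocHeat_eq_appellTransform, heatPoly_eq_heatFlow]
  exact ((isCaloricAt_heatFlow (X ^ n) (-1 / t)).appellTransform ht).const_mul (2 ^ n)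

/-- Every associated heat function `w_n` satisfies the heat equation
`∂w_n/∂t = (1/2)·∂²w_n/∂x²` at every `(x,t)` with `t > 0`. -/
theorem assocHeat_solves_heat_equation (n : ℕ) :
    ∀ (x t : ℝ), 0 < t →
      deriv (fun τ : ℝ => assocHeat n x τ) t =
        (1 / 2) * deriv (deriv (fun ξ : ℝ => assocHeat n ξ t)) x :=
  fun x _ ht => (isCaloricAt_assocHeat n ht).deriv_time x
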